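/- In the finite discriminative clustering setup with strictly positive posterior (c(x,k) > 0 for all x, k), the one-vs-one KL GEMINI equals the expected symmetric Kullback-Leibler divergence between posterior and marginal: ∑_{a=1}^K ∑_{b=1}^K π(a)·π(b)·∑_{x∈X} q_a(x)·log(q_a(x)/q_b(x)) = ∑_{x∈X} p(x) · ( ∑_{k=1}^K c(x,k)·log(c(x,k)/π(k)) + ∑_{k=1}^K π(k)·log(π(k)/c(x,k)) ). -/

import Mathlib

open Finset

/-!
The data weight `p x` cancels from `q_a x / q_b x`, leaving the ratio of the posterior-to-marginal
ratios `c x a / π a` and `c x b / π b`. Since `π a * q_a x = p x * c x a`, the GEMINI is therefore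
the `p`-average of `∑ a, ∑ b, c x a * π b * log ((c x a / π a) / (c x b / π b))`. Splitting the
logarithm decouples `a` from `b`, and the two halves are the two directions of the divergence
between `c x` and `π`.
-/

section KullbackLeibler

variable {ι : Type*} [Fintype ι]

/-- The Kullback-Leibler divergence of two mass functions on a finite type. The convention
`0 * log (0 / t) = 0` is built in, but where `f i ≠ 0` and `g i = 0` the summand is `0`
instead of `∞`. -/
noncomputable def finiteKL (f g : ι → ℝ) : ℝ :=
  ∑ i, f i * Real.log (f i / g i)

theorem sum_sum_mul_log_div_div_eq_finiteKL_add_finiteKL {u v : ι → ℝ}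
    (hu : ∀ i, u i ≠ 0) (hv : ∀ i, v i ≠ 0) (hu1 : ∑ i, u i = 1) (hv1 : ∑ i, v i = 1) :
    ∑ a, ∑ b, u a * v b * Real.log ((u a / v a) / (u b / v b)) =
      finiteKL u v + finiteKL v u := by
  have log_split (a b : ι) : u a * v b * Real.log ((u a / v a) / (u b / v b)) =
      u a * Real.log (u a / v a) * v b + u a * (v b * Real.log (v b / u b)) := by
    rw [div_eq_mul_inv (u a / v a), inv_div,
      Real.log_mul (div_ne_zero (hu a) (hv a)) (div_ne_zero (hv b) (hu b))]
    ring
  simp only [log_split, sum_add_distrib, ← mul_sum, ← sum_mul, hu1, hv1, mul_one, one_mul,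
    finiteKL]

end KullbackLeibler

section Clustering

variable {X ι : Type*} [Fintype X]

/-- The cluster proportion `π k`: the marginal mass of cluster `k` under the data distribution `p`
and the clustering posterior `c`. -/
def clusterProportion (p : X → ℝ) (c : X → ι → ℝ) (k : ι) : ℝ :=
  ∑ x, p x * c x k

/-- The cluster-conditional distribution `q_k`, obtained from the posterior by Bayes' rule. It is
identically `0` if cluster `k` has proportion `0`. -/
noncomputable def clusterConditional (p : X → ℝ) (c : X → ι → ℝ) (k : ι) (x : X) : ℝ :=
  p x * c x k / clusterProportion p c k

/-- The one-vs-one KL GEMINI: the mean Kullback-Leibler divergence between the conditional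
distributions of two clusters drawn independently according to their proportions. -/
noncomputable def klGeminiOvO [Fintype ι] (p : X → ℝ) (c : X → ι → ℝ) : ℝ :=
  ∑ a, ∑ b, clusterProportion p c a * clusterProportion p c b *
    finiteKL (clusterConditional p c a) (clusterConditional p c b)

variable {p : X → ℝ} {c : X → ι → ℝ}

theorem sum_clusterProportion [Fintype ι] (hc1 : ∀ x, ∑ k, c x k = 1) :
    ∑ k, clusterProportion p c k = ∑ x, p x := by
  simp only [clusterProportion]
  rw [sum_comm]
  simp only [← mul_sum, hc1, mul_one]

theorem clusterProportion_mul_clusterConditional {k : ι} (hk : clusterProportion p c k ≠ 0)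
    (x : X) : clusterProportion p c k * clusterConditional p c k x = p x * c x k :=
  mul_div_cancel₀ _ hk

theorem clusterConditional_div_clusterConditional {x : X} (hx : p x ≠ 0) (a b : ι) :
    clusterConditional p c a x / clusterConditional p c b x =
      (c x a / clusterProportion p c a) / (c x b / clusterProportion p c b) := by
  rw [clusterConditional, clusterConditional, mul_div_assoc _ (c x a), mul_div_assoc _ (c x b),
    mul_div_mul_left _ _ hx]

theorem clusterProportion_mul_clusterConditional_mul_log {a : ι}
    (ha : clusterProportion p c a ≠ 0) (b : ι) (x : X) :
    clusterProportion p c a * (clusterConditional p c a x *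
        Real.log (clusterConditional p c a x / clusterConditional p c b x)) =
      p x * (c x a * Real.log
        ((c x a / clusterProportion p c a) / (c x b / clusterProportion p c b))) := by
  rw [← mul_assoc, clusterProportion_mul_clusterConditional ha, mul_assoc]
  obtain hx | hx := eq_or_ne (p x) 0
  · rw [hx, zero_mul, zero_mul]
  · rw [clusterConditional_div_clusterConditional hx]

theorem clusterProportion_mul_finiteKL {a : ι} (ha : clusterProportion p c a ≠ 0) (b : ι) :
    clusterProportion p c a * finiteKL (clusterConditional p c a) (clusterConditional p c b) =
      ∑ x, p x * (c x a * Real.log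
        ((c x a / clusterProportion p c a) / (c x b / clusterProportion p c b))) := by
  simp only [finiteKL, mul_sum, clusterProportion_mul_clusterConditional_mul_log ha]

theorem klGeminiOvO_eq_sum [Fintype ι] (hprop : ∀ k, clusterProportion p c k ≠ 0) :
    klGeminiOvO p c = ∑ x, p x * ∑ a, ∑ b, c x a * clusterProportion p c b *
      Real.log ((c x a / clusterProportion p c a) / (c x b / clusterProportion p c b)) := by
  have pair_term (a b : ι) : clusterProportion p c a * clusterProportion p c b *
      finiteKL (clusterConditional p c a) (clusterConditional p c b) =
        ∑ x, p x * (c x a * clusterProportion p c b * Real.log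
          ((c x a / clusterProportion p c a) / (c x b / clusterProportion p c b))) := by
    rw [mul_right_comm, clusterProportion_mul_finiteKL (hprop a), sum_mul]
    exact sum_congr rfl fun x _ => by ring
  calc klGeminiOvO p c
    _ = ∑ a, ∑ x, ∑ b, p x * (c x a * clusterProportion p c b * Real.log
          ((c x a / clusterProportion p c a) / (c x b / clusterProportion p c b))) := by
      simp only [klGeminiOvO, pair_term]
      exact sum_congr rfl fun a _ => sum_comm
    _ = _ := by
      rw [sum_comm]
      simp only [mul_sum]

theorem gemini_ovo_kl_eq_expected_symmetric_kl_general [Fintype ι] (hp1 : ∑ x, p x = 1)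
    (hcpos : ∀ x k, 0 < c x k) (hc1 : ∀ x, ∑ k, c x k = 1)
    (hprop : ∀ k, 0 < clusterProportion p c k) :
    klGeminiOvO p c = ∑ x, p x *
      (finiteKL (c x) (clusterProportion p c) + finiteKL (clusterProportion p c) (c x)) := by
  have hprop1 : ∑ k, clusterProportion p c k = 1 := (sum_clusterProportion hc1).trans hp1
  rw [klGeminiOvO_eq_sum fun k => (hprop k).ne']
  refine sum_congr rfl fun x _ => ?_
  rw [sum_sum_mul_log_div_div_eq_finiteKL_add_finiteKL (fun k => (hcpos x k).ne')
    (fun k => (hprop k).ne') (hc1 x) hprop1]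

end Clustering

/-- In the finite discriminative clustering setup with strictly
positive posterior, the one-vs-one KL GEMINI equals the expected symmetric
Kullback-Leibler divergence between the posterior and the marginal. -/
theorem gemini_ovo_kl_eq_expected_symmetric_kl
    {X : Type*} [Fintype X] [Nonempty X]
    (p : X → ℝ) (hp : ∀ x, 0 < p x) (hp1 : ∑ x, p x = 1)
    (K : ℕ) (hK : 0 < K)
    (c : X → Fin K → ℝ) (hcpos : ∀ x k, 0 < c x k) (hc1 : ∀ x, ∑ k, c x k = 1)
    (pr : Fin K → ℝ) (hpr : ∀ k, pr k = ∑ x, p x * c x k) (hprpos : ∀ k, 0 < pr k)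
    (q : Fin K → X → ℝ) (hq : ∀ k x, q k x = p x * c x k / pr k) :
    ∑ a, ∑ b, pr a * pr b * ∑ x, q a x * Real.log (q a x / q b x)
      = ∑ x, p x * ((∑ k, c x k * Real.log (c x k / pr k))
          + (∑ k, pr k * Real.log (pr k / c x k))) := by
  obtain rfl : pr = clusterProportion p c := funext hpr
  obtain rfl : q = clusterConditional p c := funext₂ hq
  exact gemini_ovo_kl_eq_expected_symmetric_kl_general hp1 hcpos hc1 hprpos
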